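/- arXiv:1710.10052 — 4 statements merged into one kernel-verified Lean document; each statement's English description precedes it below -/
import Mathlib

section
/- For every θ ∈ (0,π) and φ ∈ ℝ, the coordinate area element of the parametrised surface x satisfies ‖∂_θ x(θ,φ) × ∂_φ x(θ,φ)‖ = |J(θ,φ)| · sinθ, where × is the cross product in ℝ³. In particular if J > 0 then the area element of the surface is dA = J sinθ dθ dφ. -/
noncomputable section

/-- The unit radial vector `ℓ(θ,φ) = (sinθ cosφ, sinθ sinφ, cosθ)` in `ℝ³`. -/
def sphL (θ φ : ℝ) : Fin 3 → ℝ :=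
  ![Real.sin θ * Real.cos φ, Real.sin θ * Real.sin φ, Real.cos θ]

/-- The complex vector `m(θ,φ) = (1/√2)(cosθcosφ − i sinφ, cosθsinφ + i cosφ, −sinθ)` in `ℂ³`. -/
def sphM (θ φ : ℝ) : Fin 3 → ℂ :=
  ![(Real.sqrt 2 : ℂ)⁻¹ *
      (Complex.ofReal (Real.cos θ * Real.cos φ) - Complex.I * Complex.ofReal (Real.sin φ)),
    (Real.sqrt 2 : ℂ)⁻¹ *
      (Complex.ofReal (Real.cos θ * Real.sin φ) + Complex.I * Complex.ofReal (Real.cos φ)),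
    (Real.sqrt 2 : ℂ)⁻¹ * (-Complex.ofReal (Real.sin θ))]

/-- The Newman–Penrose operator `ð` acting on a function `η(θ,φ)` of spin weight `s`:
`ðη = (1/√2)(sinθ)^s (∂_θ + (i/sinθ)∂_φ)((sinθ)^{-s} η)`. -/
def eth (s : ℤ) (η : ℝ → ℝ → ℂ) (θ φ : ℝ) : ℂ :=
  (Real.sqrt 2 : ℂ)⁻¹ * (Real.sin θ : ℂ) ^ s *
    (deriv (fun t => (Real.sin t : ℂ) ^ (-s) * η t φ) θ +
      Complex.I / (Real.sin θ : ℂ) * deriv (fun p => (Real.sin θ : ℂ) ^ (-s) * η θ p) φ)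

/-- The operator `ð̄` acting on a function `η(θ,φ)` of spin weight `s`:
`ð̄η = (1/√2)(sinθ)^{-s} (∂_θ − (i/sinθ)∂_φ)((sinθ)^{s} η)`. -/
def ethbar (s : ℤ) (η : ℝ → ℝ → ℂ) (θ φ : ℝ) : ℂ :=
  (Real.sqrt 2 : ℂ)⁻¹ * (Real.sin θ : ℂ) ^ (-s) *
    (deriv (fun t => (Real.sin t : ℂ) ^ s * η t φ) θ -
      Complex.I / (Real.sin θ : ℂ) * deriv (fun p => (Real.sin θ : ℂ) ^ s * η θ p) φ)

/-- The stutzfunction as a (complex-valued) function of the spherical coordinates: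
`H(θ,φ) = H(ℓ(θ,φ))`. -/
def HC (H : (Fin 3 → ℝ) → ℝ) (θ φ : ℝ) : ℂ := (H (sphL θ φ) : ℂ)

/-- `ðH` of the (spin-weight 0) stutzfunction. -/
def ethH (H : (Fin 3 → ℝ) → ℝ) : ℝ → ℝ → ℂ := eth 0 (HC H)

/-- `ð̄H` (spin weight `-1`). -/
def ethbarH (H : (Fin 3 → ℝ) → ℝ) : ℝ → ℝ → ℂ := ethbar 0 (HC H)

/-- `ð²H`: `ð` (at spin weight 1) applied to `ðH`. -/
def eth2H (H : (Fin 3 → ℝ) → ℝ) : ℝ → ℝ → ℂ := eth 1 (ethH H)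

/-- `ð̄²H`: `ð̄` (at spin weight `-1`) applied to `ð̄H`. -/
def ethbar2H (H : (Fin 3 → ℝ) → ℝ) : ℝ → ℝ → ℂ := ethbar (-1) (ethbarH H)

/-- `ðð̄H`: `ð` (at spin weight `-1`) applied to `ð̄H`; it is real. -/
def ethethbarH (H : (Fin 3 → ℝ) → ℝ) : ℝ → ℝ → ℂ := eth (-1) (ethbarH H)

/-- The parametrised surface `x(θ,φ) = H ℓ + (ð̄H) m + (ðH) conj(m)`; this vector is real,
and we record its (real) components. -/
def surf (H : (Fin 3 → ℝ) → ℝ) (θ φ : ℝ) : Fin 3 → ℝ := fun i =>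
  (HC H θ φ * (sphL θ φ i : ℂ) + ethbarH H θ φ * sphM θ φ i +
    ethH H θ φ * (starRingEnd ℂ) (sphM θ φ i)).re

/-- `J(θ,φ) = (H + ðð̄H)² − (ð²H)(ð̄²H)`; this quantity is real and we take its real part. -/
def Jfun (H : (Fin 3 → ℝ) → ℝ) (θ φ : ℝ) : ℝ :=
  ((HC H θ φ + ethethbarH H θ φ) ^ 2 - eth2H H θ φ * ethbar2H H θ φ).re

/-- The Euclidean norm on `ℝ³`. -/
def norm3 (v : Fin 3 → ℝ) : ℝ := Real.sqrt (v 0 ^ 2 + v 1 ^ 2 + v 2 ^ 2)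

/-- The Euclidean dot product on `ℝ³`. -/
def dot3 (u v : Fin 3 → ℝ) : ℝ := ∑ i, u i * v i

/-!
In the orthonormal frame `(e_θ, e_φ)` of the sphere, `m = (e_θ + i e_φ)/√2`, so that
`x = H ℓ + ∇H`. Differentiating along the frame, the `ℓ`-components cancel and
`∂_θ x = W₀₀ e_θ + W₀₁ e_φ`, `∂_φ x = sinθ (W₁₀ e_θ + W₁₁ e_φ)`, where `W = ∇²H + H g`. Hence
`∂_θ x × ∂_φ x = sinθ · det W · ℓ`. On the other side, `H + ðð̄H` is half the trace of the symmetric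
matrix `W` and `ð²H = (W₀₀ - W₁₁)/2 + i W₀₁` is its trace-free part, so `J = det W`.
-/

section SecondDerivative

open Topology

variable {E F : Type*} [NormedAddCommGroup E] [NormedSpace ℝ E] [NormedAddCommGroup F]
  [NormedSpace ℝ F] {f : E → F} {x : E}

lemma eventually_differentiableAt_of_contDiffAt {n : ℕ} (hf : ContDiffAt ℝ n f x) (hn : n ≠ 0) :
    ∀ᶠ z in 𝓝 x, DifferentiableAt ℝ f z :=
  (hf.eventually (by simp)).mono fun _ hz => hz.differentiableAt (by exact_mod_cast hn)

lemma hasFDerivAt_fderiv_apply (hf : ContDiffAt ℝ 2 f x) (v : E) :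
    HasFDerivAt (fun z => fderiv ℝ f z v) ((fderiv ℝ (fderiv ℝ f) x).flip v) x := by
  have hf' : DifferentiableAt ℝ (fderiv ℝ f) x :=
    (hf.fderiv_right (m := 1) (by norm_num)).differentiableAt (by simp)
  simpa using hf'.hasFDerivAt.clm_apply (hasFDerivAt_const v x)

end SecondDerivative

/-- The partial derivative of `f` in its first argument, `∂f/∂θ` for `f` a function of `(θ, φ)`. -/
def partialFst {E : Type*} [NormedAddCommGroup E] [NormedSpace ℝ E] (f : ℝ → ℝ → E) (x y : ℝ) : E :=
  deriv (fun t => f t y) x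

/-- The partial derivative of `f` in its second argument, `∂f/∂φ` for `f` a function of `(θ, φ)`. -/
def partialSnd {E : Type*} [NormedAddCommGroup E] [NormedSpace ℝ E] (f : ℝ → ℝ → E) (x y : ℝ) : E :=
  deriv (fun p => f x p) y

section PartialDerivatives

open Function Topology

variable {E : Type*} [NormedAddCommGroup E] [NormedSpace ℝ E] {f : ℝ → ℝ → E} {x y : ℝ}

lemma hasDerivAt_fst_of_hasFDerivAt {f' : ℝ × ℝ →L[ℝ] E}
    (hf : HasFDerivAt (uncurry f) f' (x, y)) : HasDerivAt (fun t => f t y) (f' (1, 0)) x :=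
  hf.comp_hasDerivAt (f := fun t => (t, y)) x ((hasDerivAt_id' x).prodMk (hasDerivAt_const x y))

lemma hasDerivAt_snd_of_hasFDerivAt {f' : ℝ × ℝ →L[ℝ] E}
    (hf : HasFDerivAt (uncurry f) f' (x, y)) : HasDerivAt (fun p => f x p) (f' (0, 1)) y :=
  hf.comp_hasDerivAt (f := fun p => (x, p)) y ((hasDerivAt_const y x).prodMk (hasDerivAt_id' y))

lemma hasDerivAt_partialFst (hf : DifferentiableAt ℝ (uncurry f) (x, y)) :
    HasDerivAt (fun t => f t y) (partialFst f x y) x :=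
  (hasDerivAt_fst_of_hasFDerivAt hf.hasFDerivAt).differentiableAt.hasDerivAt

lemma hasDerivAt_partialSnd (hf : DifferentiableAt ℝ (uncurry f) (x, y)) :
    HasDerivAt (fun p => f x p) (partialSnd f x y) y :=
  (hasDerivAt_snd_of_hasFDerivAt hf.hasFDerivAt).differentiableAt.hasDerivAt

lemma uncurry_partialFst_eventuallyEq (hf : ContDiffAt ℝ 2 (uncurry f) (x, y)) :
    uncurry (partialFst f) =ᶠ[𝓝 (x, y)] fun z => fderiv ℝ (uncurry f) z (1, 0) :=
  (eventually_differentiableAt_of_contDiffAt (n := 2) hf two_ne_zero).mono fun _ hz =>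
    (hasDerivAt_fst_of_hasFDerivAt hz.hasFDerivAt).deriv

lemma uncurry_partialSnd_eventuallyEq (hf : ContDiffAt ℝ 2 (uncurry f) (x, y)) :
    uncurry (partialSnd f) =ᶠ[𝓝 (x, y)] fun z => fderiv ℝ (uncurry f) z (0, 1) :=
  (eventually_differentiableAt_of_contDiffAt (n := 2) hf two_ne_zero).mono fun _ hz =>
    (hasDerivAt_snd_of_hasFDerivAt hz.hasFDerivAt).deriv

lemma hasFDerivAt_uncurry_partialFst (hf : ContDiffAt ℝ 2 (uncurry f) (x, y)) :
    HasFDerivAt (uncurry (partialFst f))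
      ((fderiv ℝ (fderiv ℝ (uncurry f)) (x, y)).flip (1, 0)) (x, y) :=
  (hasFDerivAt_fderiv_apply hf (1, 0)).congr_of_eventuallyEq (uncurry_partialFst_eventuallyEq hf)

lemma hasFDerivAt_uncurry_partialSnd (hf : ContDiffAt ℝ 2 (uncurry f) (x, y)) :
    HasFDerivAt (uncurry (partialSnd f))
      ((fderiv ℝ (fderiv ℝ (uncurry f)) (x, y)).flip (0, 1)) (x, y) :=
  (hasFDerivAt_fderiv_apply hf (0, 1)).congr_of_eventuallyEq (uncurry_partialSnd_eventuallyEq hf)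

lemma partialFst_partialSnd_comm (hf : ContDiffAt ℝ 2 (uncurry f) (x, y)) :
    partialFst (partialSnd f) x y = partialSnd (partialFst f) x y :=
  calc partialFst (partialSnd f) x y
      = fderiv ℝ (fderiv ℝ (uncurry f)) (x, y) (1, 0) (0, 1) :=
        (hasDerivAt_fst_of_hasFDerivAt (hasFDerivAt_uncurry_partialSnd hf)).deriv
    _ = fderiv ℝ (fderiv ℝ (uncurry f)) (x, y) (0, 1) (1, 0) :=
        hf.isSymmSndFDerivAt (by simp) _ _
    _ = partialSnd (partialFst f) x y :=
        (hasDerivAt_snd_of_hasFDerivAt (hasFDerivAt_uncurry_partialFst hf)).deriv.symm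

end PartialDerivatives

section SphericalFrame

open scoped Matrix

/-- The polar unit tangent vector `e_θ` of the unit sphere at `sphL θ φ`. -/
def sphTheta (θ φ : ℝ) : Fin 3 → ℝ :=
  ![Real.cos θ * Real.cos φ, Real.cos θ * Real.sin φ, -Real.sin θ]

/-- The azimuthal unit tangent vector `e_φ` of the unit sphere at `sphL θ φ`; it does not depend
on `θ`. -/
def sphPhi (φ : ℝ) : Fin 3 → ℝ :=
  ![-Real.sin φ, Real.cos φ, 0]

lemma sphM_eq_sphTheta_add_I_mul_sphPhi (θ φ : ℝ) (i : Fin 3) :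
    sphM θ φ i = (Real.sqrt 2 : ℂ)⁻¹ * (sphTheta θ φ i + Complex.I * sphPhi φ i) := by
  fin_cases i <;> simp [sphM, sphTheta, sphPhi, sub_eq_add_neg]

lemma hasDerivAt_sphL_fst (θ φ : ℝ) :
    HasDerivAt (fun t => sphL t φ) (sphTheta θ φ) θ := by
  refine hasDerivAt_pi.2 fun i => ?_
  fin_cases i
  · exact (Real.hasDerivAt_sin θ).mul_const _
  · exact (Real.hasDerivAt_sin θ).mul_const _
  · exact Real.hasDerivAt_cos θ

lemma hasDerivAt_sphTheta_fst (θ φ : ℝ) :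
    HasDerivAt (fun t => sphTheta t φ) (-sphL θ φ) θ := by
  refine hasDerivAt_pi.2 fun i => ?_
  fin_cases i
  · exact ((Real.hasDerivAt_cos θ).mul_const _).congr_deriv (neg_mul _ _)
  · exact ((Real.hasDerivAt_cos θ).mul_const _).congr_deriv (neg_mul _ _)
  · exact (Real.hasDerivAt_sin θ).neg

lemma hasDerivAt_sphL_snd (θ φ : ℝ) :
    HasDerivAt (fun p => sphL θ p) (Real.sin θ • sphPhi φ) φ := by
  refine hasDerivAt_pi.2 fun i => ?_
  fin_cases i
  · exact (Real.hasDerivAt_cos φ).const_mul _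
  · exact (Real.hasDerivAt_sin φ).const_mul _
  · exact (hasDerivAt_const φ _).congr_deriv (mul_zero _).symm

lemma hasDerivAt_sphTheta_snd (θ φ : ℝ) :
    HasDerivAt (fun p => sphTheta θ p) (Real.cos θ • sphPhi φ) φ := by
  refine hasDerivAt_pi.2 fun i => ?_
  fin_cases i
  · exact (Real.hasDerivAt_cos φ).const_mul _
  · exact (Real.hasDerivAt_sin φ).const_mul _
  · exact (hasDerivAt_const φ _).congr_deriv (mul_zero _).symm

lemma hasDerivAt_sphPhi (θ φ : ℝ) :
    HasDerivAt sphPhi (-(Real.sin θ • sphL θ φ + Real.cos θ • sphTheta θ φ)) φ := by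
  have hθ := Real.sin_sq_add_cos_sq θ
  refine hasDerivAt_pi.2 fun i => ?_
  fin_cases i
  · refine (Real.hasDerivAt_sin φ).neg.congr_deriv ?_
    simp only [sphL, sphTheta, Fin.zero_eta, Pi.neg_apply, Pi.add_apply, Pi.smul_apply,
      Matrix.cons_val, smul_eq_mul]
    linear_combination Real.cos φ * hθ
  · refine (Real.hasDerivAt_cos φ).congr_deriv ?_
    simp only [sphL, sphTheta, Fin.mk_one, Pi.neg_apply, Pi.add_apply, Pi.smul_apply,
      Matrix.cons_val, smul_eq_mul]
    linear_combination Real.sin φ * hθ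
  · refine (hasDerivAt_const φ _).congr_deriv ?_
    simp only [sphL, sphTheta, Fin.reduceFinMk, Pi.neg_apply, Pi.add_apply, Pi.smul_apply,
      Matrix.cons_val, smul_eq_mul]
    ring

lemma hasDerivAt_frame_combination_fst {a b c : ℝ → ℝ} {a' b' c' θ : ℝ} (φ : ℝ)
    (ha : HasDerivAt a a' θ) (hb : HasDerivAt b b' θ) (hc : HasDerivAt c c' θ) :
    HasDerivAt (fun t => a t • sphL t φ + b t • sphTheta t φ + c t • sphPhi φ)
      ((a' - b θ) • sphL θ φ + (a θ + b') • sphTheta θ φ + c' • sphPhi φ) θ := by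
  refine (((ha.smul (hasDerivAt_sphL_fst θ φ)).add (hb.smul (hasDerivAt_sphTheta_fst θ φ))).add
    (hc.smul_const (sphPhi φ))).congr_deriv ?_
  module

lemma hasDerivAt_frame_combination_snd {a b c : ℝ → ℝ} {a' b' c' φ : ℝ} (θ : ℝ)
    (ha : HasDerivAt a a' φ) (hb : HasDerivAt b b' φ) (hc : HasDerivAt c c' φ) :
    HasDerivAt (fun p => a p • sphL θ p + b p • sphTheta θ p + c p • sphPhi p)
      ((a' - Real.sin θ * c φ) • sphL θ φ + (b' - Real.cos θ * c φ) • sphTheta θ φ +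
        (Real.sin θ * a φ + Real.cos θ * b φ + c') • sphPhi φ) φ := by
  refine (((ha.smul (hasDerivAt_sphL_snd θ φ)).add (hb.smul (hasDerivAt_sphTheta_snd θ φ))).add
    (hc.smul (hasDerivAt_sphPhi θ φ))).congr_deriv ?_
  module

lemma crossProduct_sphTheta_sphPhi (θ φ : ℝ) : sphTheta θ φ ⨯₃ sphPhi φ = sphL θ φ := by
  have hφ := Real.sin_sq_add_cos_sq φ
  ext i
  fin_cases i
  · simp [cross_apply, sphTheta, sphPhi, sphL]
  · simp [cross_apply, sphTheta, sphPhi, sphL]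
  · simp only [cross_apply, sphTheta, sphPhi, sphL, Fin.reduceFinMk, Matrix.cons_val]
    linear_combination Real.cos θ * hφ

lemma crossProduct_tangent_combination (a b c d θ φ : ℝ) :
    (a • sphTheta θ φ + b • sphPhi φ) ⨯₃ (c • sphTheta θ φ + d • sphPhi φ) =
      (a * d - b * c) • sphL θ φ := by
  simp only [map_add, map_smul, LinearMap.add_apply, LinearMap.smul_apply, cross_self,
    ← cross_anticomm (sphTheta θ φ) (sphPhi φ), crossProduct_sphTheta_sphPhi]
  module

lemma norm3_smul (c : ℝ) (v : Fin 3 → ℝ) : norm3 (c • v) = |c| * norm3 v := by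
  simp only [norm3, Pi.smul_apply, smul_eq_mul, mul_pow, ← mul_add]
  rw [Real.sqrt_mul (sq_nonneg c), Real.sqrt_sq_eq_abs]

lemma norm3_sphL (θ φ : ℝ) : norm3 (sphL θ φ) = 1 := by
  rw [norm3, Real.sqrt_eq_one]
  simp only [sphL, Matrix.cons_val]
  linear_combination
    Real.sin θ ^ 2 * Real.sin_sq_add_cos_sq φ + Real.sin_sq_add_cos_sq θ

lemma sphL_ne_zero (θ φ : ℝ) : sphL θ φ ≠ 0 := by
  intro h
  simpa [h, norm3] using norm3_sphL θ φ

lemma contDiff_sphL {n : WithTop ℕ∞} : ContDiff ℝ n (fun z : ℝ × ℝ => sphL z.1 z.2) := by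
  refine contDiff_pi.2 fun i => ?_
  fin_cases i <;> simp only [sphL, Fin.zero_eta, Fin.mk_one, Fin.reduceFinMk, Matrix.cons_val] <;>
    fun_prop

end SphericalFrame

section SupportMatrix

open Function

/-- The component along `sphPhi` of the gradient of `f` on the unit sphere; the component along
`sphTheta` is `partialFst f`. At the poles, where `sin θ = 0`, it takes the junk value `0`. -/
def gradPhi (f : ℝ → ℝ → ℝ) (θ φ : ℝ) : ℝ := partialSnd f θ φ / Real.sin θ

/-- The matrix of `∇²f + f g`, for `g` the round metric of the sphere, in the orthonormal frame
`(sphTheta, sphPhi)`; for a support function it is, up to sign, the inverse of the Weingarten map.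
Row `i` of the `∇²f` part is the covariant derivative of the gradient in the `i`-th frame direction.
The entries are meaningful only away from the poles, where `sin θ = 0` and the divisions give
junk values. -/
def supportMatrix (f : ℝ → ℝ → ℝ) (θ φ : ℝ) : Matrix (Fin 2) (Fin 2) ℝ :=
  !![f θ φ + partialFst (partialFst f) θ φ, partialFst (gradPhi f) θ φ;
    (partialSnd (partialFst f) θ φ - Real.cos θ * gradPhi f θ φ) / Real.sin θ,
    f θ φ + (partialSnd (gradPhi f) θ φ + Real.cos θ * partialFst f θ φ) / Real.sin θ]

variable {f : ℝ → ℝ → ℝ} {θ φ : ℝ}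

lemma differentiableAt_uncurry_gradPhi (hf : ContDiffAt ℝ 2 (uncurry f) (θ, φ))
    (hθ : Real.sin θ ≠ 0) : DifferentiableAt ℝ (uncurry (gradPhi f)) (θ, φ) := by
  have hsnd : DifferentiableAt ℝ (uncurry (partialSnd f)) (θ, φ) :=
    (hasFDerivAt_uncurry_partialSnd hf).differentiableAt
  have hquot : DifferentiableAt ℝ (fun z : ℝ × ℝ => uncurry (partialSnd f) z / Real.sin z.1)
      (θ, φ) := by fun_prop (disch := exact hθ)
  exact hquot

lemma partialFst_gradPhi (hf : ContDiffAt ℝ 2 (uncurry f) (θ, φ)) (hθ : Real.sin θ ≠ 0) :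
    partialFst (gradPhi f) θ φ =
      (partialSnd (partialFst f) θ φ - Real.cos θ * gradPhi f θ φ) / Real.sin θ := by
  have hquot : partialFst (gradPhi f) θ φ =
      (partialFst (partialSnd f) θ φ * Real.sin θ - partialSnd f θ φ * Real.cos θ) /
        Real.sin θ ^ 2 :=
    ((hasDerivAt_partialFst (hasFDerivAt_uncurry_partialSnd hf).differentiableAt).div
      (Real.hasDerivAt_sin θ) hθ).deriv
  rw [hquot, partialFst_partialSnd_comm hf, gradPhi]
  field_simp

lemma supportMatrix_isSymm (hf : ContDiffAt ℝ 2 (uncurry f) (θ, φ)) (hθ : Real.sin θ ≠ 0) :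
    (supportMatrix f θ φ).IsSymm := by
  refine Matrix.IsSymm.ext fun i j => ?_
  fin_cases i <;> fin_cases j
  · rfl
  · exact (partialFst_gradPhi hf hθ).symm
  · exact partialFst_gradPhi hf hθ
  · rfl

end SupportMatrix

section SpinWeightedDerivatives

open Complex ComplexConjugate

lemma sqrt_two_inv_mul_self : (Real.sqrt 2 : ℂ)⁻¹ * (Real.sqrt 2 : ℂ)⁻¹ = 1 / 2 := by
  rw [← mul_inv, ← ofReal_mul, Real.mul_self_sqrt zero_le_two, one_div, ofReal_ofNat]

lemma spin_frame_contraction (u v a b : ℝ) :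
    (Real.sqrt 2 : ℂ)⁻¹ * (u + I * (-v : ℝ)) * ((Real.sqrt 2 : ℂ)⁻¹ * (a + I * b)) +
      (Real.sqrt 2 : ℂ)⁻¹ * (u + I * v) * conj ((Real.sqrt 2 : ℂ)⁻¹ * (a + I * b)) =
        (u * a + v * b : ℝ) := by
  simp only [map_mul, map_add, map_inv₀, conj_ofReal, conj_I, ofReal_add, ofReal_mul, ofReal_neg]
  linear_combination 2 * (u * a - I ^ 2 * v * b) * sqrt_two_inv_mul_self - v * b * I_sq

lemma deriv_ofReal_comp (g : ℝ → ℝ) (x : ℝ) : deriv (fun t => (g t : ℂ)) x = deriv g x := by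
  by_cases hg : DifferentiableAt ℝ g x
  · exact hg.hasDerivAt.ofReal_comp.deriv
  · have hg' : ¬DifferentiableAt ℝ (fun t => (g t : ℂ)) x := fun h =>
      hg (reCLM.differentiableAt.comp x h)
    rw [deriv_zero_of_not_differentiableAt hg, deriv_zero_of_not_differentiableAt hg', ofReal_zero]

lemma eth_zero_ofReal (f : ℝ → ℝ → ℝ) (θ φ : ℝ) :
    eth 0 (fun t p => (f t p : ℂ)) θ φ =
      (Real.sqrt 2 : ℂ)⁻¹ * (partialFst f θ φ + I * gradPhi f θ φ) := by
  simp only [eth, neg_zero, zpow_zero, one_mul, mul_one, deriv_ofReal_comp, gradPhi,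
    partialFst, partialSnd, ofReal_div]
  ring

lemma ethbar_neg_conj (s : ℤ) (η : ℝ → ℝ → ℂ) (θ φ : ℝ) :
    ethbar (-s) (fun t p => conj (η t p)) θ φ = conj (eth s η θ φ) := by
  have deriv_conj (g : ℝ → ℂ) (x : ℝ) : conj (deriv g x) = deriv (fun t => conj (g t)) x :=
    deriv.star.symm
  simp only [eth, ethbar, neg_neg, map_mul, map_add, map_div₀, map_inv₀, map_zpow₀, conj_ofReal,
    conj_I, deriv_conj]
  ring

lemma eth_eq_of_hasDerivAt (s : ℤ) {η : ℝ → ℝ → ℂ} {ηθ ηφ : ℂ} {θ φ : ℝ} (hθ : Real.sin θ ≠ 0)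
    (hηθ : HasDerivAt (fun t => η t φ) ηθ θ) (hηφ : HasDerivAt (fun p => η θ p) ηφ φ) :
    eth s η θ φ = (Real.sqrt 2 : ℂ)⁻¹ *
      (ηθ + I / Real.sin θ * ηφ - s * (Real.cos θ / Real.sin θ) * η θ φ) := by
  have hsin : (Real.sin θ : ℂ) ≠ 0 := ofReal_ne_zero.2 hθ
  have hpow : HasDerivAt (fun t => (Real.sin t : ℂ) ^ (-s))
      (((-s : ℤ) : ℂ) * (Real.sin θ : ℂ) ^ (-s - 1) * Real.cos θ) θ :=
    HasDerivAt.comp (h₂ := fun z : ℂ => z ^ (-s)) θ (hasDerivAt_zpow (-s) _ (.inl hsin))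
      (Real.hasDerivAt_sin θ).ofReal_comp
  have hθ_deriv := (hpow.fun_mul hηθ).deriv
  have hφ_deriv := (hηφ.const_mul ((Real.sin θ : ℂ) ^ (-s))).deriv
  have hcancel : (Real.sin θ : ℂ) ^ s * (Real.sin θ : ℂ) ^ (-s) = 1 := by
    rw [← zpow_add₀ hsin, add_neg_cancel, zpow_zero]
  rw [eth, hθ_deriv, hφ_deriv, zpow_sub_one₀ hsin, Int.cast_neg]
  linear_combination (Real.sqrt 2 : ℂ)⁻¹ *
    (ηθ + I / Real.sin θ * ηφ - s * (Real.cos θ / Real.sin θ) * η θ φ) * hcancel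

lemma eth_frame_components (s : ℤ) {u v : ℝ → ℝ → ℝ} {uθ uφ vθ vφ θ φ : ℝ} (hθ : Real.sin θ ≠ 0)
    (huθ : HasDerivAt (fun t => u t φ) uθ θ) (huφ : HasDerivAt (fun p => u θ p) uφ φ)
    (hvθ : HasDerivAt (fun t => v t φ) vθ θ) (hvφ : HasDerivAt (fun p => v θ p) vφ φ) :
    eth s (fun t p => (Real.sqrt 2 : ℂ)⁻¹ * (u t p + I * v t p)) θ φ =
      ((uθ - (vφ + s * Real.cos θ * u θ φ) / Real.sin θ) +
        I * (vθ + (uφ - s * Real.cos θ * v θ φ) / Real.sin θ)) / 2 := by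
  rw [eth_eq_of_hasDerivAt s hθ
    ((huθ.ofReal_comp.add (hvθ.ofReal_comp.const_mul I)).const_mul _)
    ((huφ.ofReal_comp.add (hvφ.ofReal_comp.const_mul I)).const_mul _)]
  linear_combination (uθ + I * vθ + I / Real.sin θ * (uφ + I * vφ) -
    s * (Real.cos θ / Real.sin θ) * (u θ φ + I * v θ φ)) * sqrt_two_inv_mul_self +
    vφ / Real.sin θ / 2 * I_sq

end SpinWeightedDerivatives

section StutzfunctionSurface

open Complex Function ComplexConjugate

/-- The stutzfunction as a real function of the spherical coordinates; `HC` is its coercion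
to `ℂ`. -/
def HR (H : (Fin 3 → ℝ) → ℝ) (θ φ : ℝ) : ℝ := H (sphL θ φ)

variable (H : (Fin 3 → ℝ) → ℝ) {θ φ : ℝ}

lemma HC_eq_ofReal_HR (θ φ : ℝ) : HC H θ φ = (HR H θ φ : ℂ) := rfl

lemma ethH_eq_gradient : ethH H = fun θ φ =>
    (Real.sqrt 2 : ℂ)⁻¹ * (partialFst (HR H) θ φ + I * gradPhi (HR H) θ φ) :=
  funext₂ fun θ φ => eth_zero_ofReal (HR H) θ φ

lemma ethbarH_eq_conj_ethH : ethbarH H = fun θ φ => conj (ethH H θ φ) := by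
  funext θ φ
  simpa [HC] using! ethbar_neg_conj 0 (HC H) θ φ

lemma ethbarH_eq_gradient : ethbarH H = fun θ φ =>
    (Real.sqrt 2 : ℂ)⁻¹ * (partialFst (HR H) θ φ + I * (-gradPhi (HR H) θ φ : ℝ)) := by
  simp [ethbarH_eq_conj_ethH, ethH_eq_gradient]

lemma ethbar2H_eq_conj_eth2H (θ φ : ℝ) : ethbar2H H θ φ = conj (eth2H H θ φ) := by
  rw [ethbar2H, ethbarH_eq_conj_ethH]
  exact ethbar_neg_conj 1 (ethH H) θ φ

lemma surf_eq_frame_combination (θ φ : ℝ) :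
    surf H θ φ = HR H θ φ • sphL θ φ + partialFst (HR H) θ φ • sphTheta θ φ +
      gradPhi (HR H) θ φ • sphPhi φ := by
  funext i
  simp only [surf, ethbarH_eq_gradient, ethH_eq_gradient, sphM_eq_sphTheta_add_I_mul_sphPhi,
    Pi.add_apply, Pi.smul_apply, smul_eq_mul]
  rw [add_assoc, spin_frame_contraction, HC_eq_ofReal_HR, ← ofReal_mul, ← ofReal_add, ofReal_re,
    add_assoc]

variable {H}

lemma eth2H_eq_supportMatrix (hH : ContDiffAt ℝ 2 (uncurry (HR H)) (θ, φ))
    (hθ : Real.sin θ ≠ 0) :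
    eth2H H θ φ = (supportMatrix (HR H) θ φ 0 0 - supportMatrix (HR H) θ φ 1 1) / 2 +
      I * ((supportMatrix (HR H) θ φ 0 1 + supportMatrix (HR H) θ φ 1 0) / 2) := by
  rw [eth2H, ethH_eq_gradient, eth_frame_components 1 hθ
    (hasDerivAt_partialFst (hasFDerivAt_uncurry_partialFst hH).differentiableAt)
    (hasDerivAt_partialSnd (hasFDerivAt_uncurry_partialFst hH).differentiableAt)
    (hasDerivAt_partialFst (differentiableAt_uncurry_gradPhi hH hθ))
    (hasDerivAt_partialSnd (differentiableAt_uncurry_gradPhi hH hθ))]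
  simp only [supportMatrix, Matrix.of_apply, Matrix.cons_val, ofReal_add, ofReal_sub, ofReal_mul,
    ofReal_div, Int.cast_one]
  ring

lemma HC_add_ethethbarH_eq_supportMatrix (hH : ContDiffAt ℝ 2 (uncurry (HR H)) (θ, φ))
    (hθ : Real.sin θ ≠ 0) :
    HC H θ φ + ethethbarH H θ φ =
      (supportMatrix (HR H) θ φ 0 0 + supportMatrix (HR H) θ φ 1 1) / 2 +
      I * ((supportMatrix (HR H) θ φ 1 0 - supportMatrix (HR H) θ φ 0 1) / 2) := by
  rw [ethethbarH, ethbarH_eq_gradient, eth_frame_components (-1) hθ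
    (hasDerivAt_partialFst (hasFDerivAt_uncurry_partialFst hH).differentiableAt)
    (hasDerivAt_partialSnd (hasFDerivAt_uncurry_partialFst hH).differentiableAt)
    (hasDerivAt_partialFst (differentiableAt_uncurry_gradPhi hH hθ)).neg
    (hasDerivAt_partialSnd (differentiableAt_uncurry_gradPhi hH hθ)).neg, HC_eq_ofReal_HR]
  simp only [supportMatrix, Matrix.of_apply, Matrix.cons_val, ofReal_add, ofReal_sub, ofReal_mul,
    ofReal_div, ofReal_neg, Int.cast_neg, Int.cast_one]
  ring

lemma Jfun_eq_det_supportMatrix (hH : ContDiffAt ℝ 2 (uncurry (HR H)) (θ, φ))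
    (hθ : Real.sin θ ≠ 0) : Jfun H θ φ = (supportMatrix (HR H) θ φ).det := by
  have hsymm := (supportMatrix_isSymm hH hθ).apply 0 1
  rw [Jfun, ethbar2H_eq_conj_eth2H, HC_add_ethethbarH_eq_supportMatrix hH hθ,
    eth2H_eq_supportMatrix hH hθ, hsymm, Matrix.det_fin_two, hsymm,
    ← ofReal_re (supportMatrix (HR H) θ φ 0 0 * _ - _)]
  congr 1
  simp only [map_add, map_sub, map_mul, map_div₀, map_ofNat, conj_ofReal, conj_I, ofReal_sub,
    ofReal_mul]
  linear_combination (supportMatrix (HR H) θ φ 0 1 : ℂ) ^ 2 * I_sq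

lemma hasDerivAt_surf_fst (hH : ContDiffAt ℝ 2 (uncurry (HR H)) (θ, φ)) (hθ : Real.sin θ ≠ 0) :
    HasDerivAt (fun t => surf H t φ) (supportMatrix (HR H) θ φ 0 0 • sphTheta θ φ +
      supportMatrix (HR H) θ φ 0 1 • sphPhi φ) θ := by
  simp only [surf_eq_frame_combination]
  refine (hasDerivAt_frame_combination_fst φ
    (hasDerivAt_partialFst (hH.differentiableAt two_ne_zero))
    (hasDerivAt_partialFst (hasFDerivAt_uncurry_partialFst hH).differentiableAt)
    (hasDerivAt_partialFst (differentiableAt_uncurry_gradPhi hH hθ))).congr_deriv ?_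
  simp only [supportMatrix, Matrix.of_apply, Matrix.cons_val]
  module

lemma hasDerivAt_surf_snd (hH : ContDiffAt ℝ 2 (uncurry (HR H)) (θ, φ)) (hθ : Real.sin θ ≠ 0) :
    HasDerivAt (fun p => surf H θ p) (Real.sin θ • (supportMatrix (HR H) θ φ 1 0 • sphTheta θ φ +
      supportMatrix (HR H) θ φ 1 1 • sphPhi φ)) φ := by
  have hgradPhi : Real.sin θ * gradPhi (HR H) θ φ = partialSnd (HR H) θ φ :=
    mul_div_cancel₀ _ hθ
  simp only [surf_eq_frame_combination]
  refine (hasDerivAt_frame_combination_snd θ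
    (hasDerivAt_partialSnd (hH.differentiableAt two_ne_zero))
    (hasDerivAt_partialSnd (hasFDerivAt_uncurry_partialFst hH).differentiableAt)
    (hasDerivAt_partialSnd (differentiableAt_uncurry_gradPhi hH hθ))).congr_deriv ?_
  simp only [supportMatrix, Matrix.of_apply, Matrix.cons_val, hgradPhi]
  match_scalars <;> field_simp <;> ring

lemma contDiff_uncurry_HR {n : WithTop ℕ∞} (hH : ContDiffOn ℝ n H {v | v ≠ 0}) :
    ContDiff ℝ n (uncurry (HR H)) :=
  hH.comp_contDiff contDiff_sphL fun z => sphL_ne_zero z.1 z.2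

end StutzfunctionSurface

theorem stmt1_general (H : (Fin 3 → ℝ) → ℝ) {θ φ : ℝ}
    (hH : ContDiffAt ℝ 2 (Function.uncurry (HR H)) (θ, φ)) (hθ : Real.sin θ ≠ 0) :
    norm3 (crossProduct (fun i => deriv (fun t => surf H t φ i) θ)
        (fun i => deriv (fun p => surf H θ p i) φ)) =
      |Jfun H θ φ| * |Real.sin θ| := by
  have hfst := funext fun i => (hasDerivAt_pi.1 (hasDerivAt_surf_fst hH hθ) i).deriv
  have hsnd := funext fun i => (hasDerivAt_pi.1 (hasDerivAt_surf_snd hH hθ) i).deriv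
  rw [hfst, hsnd, map_smul, crossProduct_tangent_combination, norm3_smul, norm3_smul, norm3_sphL,
    ← Matrix.det_fin_two, ← Jfun_eq_det_supportMatrix hH hθ, mul_one, mul_comm]

/-- The coordinate area element of the surface with stutzfunction `H`:
`‖∂_θ x × ∂_φ x‖ = |J| sinθ`. -/
theorem stmt1 (H : (Fin 3 → ℝ) → ℝ)
    (hH : ContDiffOn ℝ (⊤ : ℕ∞) H {v : Fin 3 → ℝ | v ≠ 0})
    (hhom : ∀ v : Fin 3 → ℝ, v ≠ 0 → ∀ t : ℝ, 0 < t → H (t • v) = H v) :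
    ∀ θ ∈ Set.Ioo 0 Real.pi, ∀ φ : ℝ,
      norm3 (crossProduct (fun i => deriv (fun t => surf H t φ i) θ)
          (fun i => deriv (fun p => surf H θ p i) φ)) =
        |Jfun H θ φ| * Real.sin θ := by
  intro θ hθ φ
  have hsin : 0 < Real.sin θ := Real.sin_pos_of_mem_Ioo hθ
  have hC2 := contDiff_uncurry_HR (hH.of_le (m := 2) (by norm_cast))
  rw [stmt1_general H hC2.contDiffAt hsin.ne', abs_of_pos hsin]
end
end

section
/- (Brunn–Minkowski Theorem for parallel bodies.) Let K ⊆ ℝ³ be a nonempty compact convex set and let B be the closed unit ball in ℝ³. Then the function R : [0,∞) → ℝ defined by R(s) := (volume(K + s•B))^{1/3}, where K + s•B is the Minkowski sum {k + s·b : k ∈ K, b ∈ B} and volume is Lebesgue measure, is concave on [0,∞). -/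
noncomputable section

open MeasureTheory Pointwise

/-!
The `d`-dimensional Brunn–Minkowski inequality `μ(A)^(1/d) + μ(B)^(1/d) ≤ μ(A + B)^(1/d)` is
derived from the Prékopa–Leindler inequality. On the line, after scaling `f` and `g` to have
supremum `1`, all superlevel sets at heights below `1` are nonempty, so Prékopa–Leindler follows by
integrating the one-dimensional Brunn–Minkowski inequality over the heights and applying AM-GM. By
Fubini it passes to products, hence to every Haar measure. For indicator functions it is the
multiplicative Brunn–Minkowski inequality, which applied to multiples of `A` and `B` of measure `1`
gives the additive one.

For convex `K` and `L`, the identity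
`a • (K + s • L) + b • (K + r • L) = K + (a * s + b * r) • L` turns Brunn–Minkowski into concavity
of `s ↦ μ(K + s • L)^(1/d)`.
-/

open Module Set
open scoped ENNReal

section ENNReal

lemma ennreal_iSup_rpow {ι : Sort*} (u : ι → ℝ≥0∞) {p : ℝ} (hp : 0 < p) :
    (⨆ i, u i) ^ p = ⨆ i, u i ^ p :=
  (ENNReal.orderIsoRpow p hp).map_iSup u

lemma ennreal_geom_mean_le_arith_mean {a b : ℝ} (ha : 0 < a) (hb : 0 < b) (hab : a + b = 1)
    (x y : ℝ≥0∞) :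
    x ^ a * y ^ b ≤ ENNReal.ofReal a * x + ENNReal.ofReal b * y := by
  have hconj : a⁻¹.HolderConjugate b⁻¹ :=
    Real.holderConjugate_iff.2 ⟨(one_lt_inv₀ ha).2 (by linarith), by simpa using hab⟩
  have hyoung := ENNReal.young_inequality (x ^ a) (y ^ b) hconj
  rwa [ENNReal.rpow_rpow_inv ha.ne', ENNReal.rpow_rpow_inv hb.ne', ENNReal.ofReal_inv_of_pos ha,
    ENNReal.ofReal_inv_of_pos hb, ENNReal.div_eq_inv_mul, ENNReal.div_eq_inv_mul, inv_inv,
    inv_inv] at hyoung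

end ENNReal

section Lintegral

variable {α : Type*} [MeasurableSpace α] {μ : Measure α} {f : α → ℝ≥0∞}

lemma lintegral_eq_iSup_lintegral_min_natCast (hf : Measurable f) :
    ∫⁻ x, f x ∂μ = ⨆ n : ℕ, ∫⁻ x, min (f x) n ∂μ := by
  have hmono : Monotone fun (n : ℕ) x => min (f x) n := fun m n hmn x =>
    min_le_min_left _ (Nat.cast_le.2 hmn)
  rw [← lintegral_iSup (fun n => hf.min measurable_const) hmono]
  refine lintegral_congr fun x => ?_
  rw [← inf_iSup_eq (f x) (fun n : ℕ => (n : ℝ≥0∞)), ENNReal.iSup_natCast, inf_top_eq]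

lemma antitone_measure_setOf_ofReal_lt :
    Antitone fun s : ℝ => μ {x | ENNReal.ofReal s < f x} := fun _ _ hst =>
  measure_mono fun _ hx => (ENNReal.ofReal_le_ofReal hst).trans_lt hx

lemma lintegral_eq_lintegral_measure_ofReal_lt (hf : Measurable f) :
    ∫⁻ x, f x ∂μ = ∫⁻ s in Ioi (0 : ℝ), μ {x | ENNReal.ofReal s < f x} := by
  by_cases htop : μ {x | f x = ∞} = 0
  · have hfin : ∀ᵐ x ∂μ, f x ≠ ∞ := measure_eq_zero_iff_ae_notMem.1 htop
    calc ∫⁻ x, f x ∂μ = ∫⁻ x, ENNReal.ofReal (f x).toReal ∂μ :=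
          lintegral_congr_ae (hfin.mono fun x hx => (ENNReal.ofReal_toReal hx).symm)
      _ = ∫⁻ s in Ioi (0 : ℝ), μ {x | s < (f x).toReal} :=
          lintegral_eq_lintegral_meas_lt μ (ae_of_all _ fun _ => ENNReal.toReal_nonneg)
            hf.ennreal_toReal.aemeasurable
      _ = ∫⁻ s in Ioi (0 : ℝ), μ {x | ENNReal.ofReal s < f x} := by
          refine setLIntegral_congr_fun measurableSet_Ioi fun s hs => measure_congr ?_
          filter_upwards [hfin] with x hx
          exact propext (ENNReal.ofReal_lt_iff_lt_toReal (le_of_lt hs) hx).symm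
  · have hle : ∫⁻ _ in Ioi (0 : ℝ), μ {x | f x = ∞} ≤
        ∫⁻ s in Ioi (0 : ℝ), μ {x | ENNReal.ofReal s < f x} :=
      lintegral_mono fun s => measure_mono fun x (hx : f x = ∞) =>
        ENNReal.ofReal_lt_top.trans_eq hx.symm
    rw [lintegral_eq_top_of_measure_eq_top_ne_zero hf.aemeasurable htop, eq_comm]
    simpa [ENNReal.mul_top htop] using hle

end Lintegral

section InnerRegular

variable {E : Type*} [TopologicalSpace E] [MeasurableSpace E] {μ : Measure E} [μ.InnerRegular]
  {A B : Set E}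

lemma measure_eq_iSup_isCompact_nonempty (hA : NullMeasurableSet A μ) (hA₀ : A.Nonempty) :
    μ A = ⨆ K : {K : Set E // K ⊆ A ∧ IsCompact K ∧ K.Nonempty}, μ K := by
  refine le_antisymm ?_ (iSup_le fun K => measure_mono K.2.1)
  obtain ⟨x, hx⟩ := hA₀
  obtain ⟨A', hA'A, hA', hAA'⟩ := hA.exists_measurable_subset_ae_eq
  rw [← measure_congr hAA', hA'.measure_eq_iSup_isCompact]
  refine iSup_le fun K => iSup₂_le fun hKA' hK => ?_
  calc μ K ≤ μ (insert x K) := measure_mono (subset_insert x K)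
    _ ≤ _ := le_iSup (fun K : {K : Set E // K ⊆ A ∧ IsCompact K ∧ K.Nonempty} => μ K)
        ⟨insert x K, insert_subset hx (hKA'.trans hA'A), hK.insert x, insert_nonempty x K⟩

lemma measure_rpow_add_le_of_forall_isCompact [Add E] {p : ℝ} (hp : 0 < p)
    (hcompact : ∀ K L : Set E, IsCompact K → IsCompact L → K.Nonempty → L.Nonempty →
      μ K ^ p + μ L ^ p ≤ μ (K + L) ^ p)
    (hA : NullMeasurableSet A μ) (hB : NullMeasurableSet B μ)
    (hA₀ : A.Nonempty) (hB₀ : B.Nonempty) :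
    μ A ^ p + μ B ^ p ≤ μ (A + B) ^ p := by
  have hindex : ∀ {S : Set E}, S.Nonempty →
      Nonempty {K : Set E // K ⊆ S ∧ IsCompact K ∧ K.Nonempty} := fun {S} ⟨x, hx⟩ =>
    ⟨{x}, singleton_subset_iff.2 hx, isCompact_singleton, singleton_nonempty x⟩
  have := hindex hA₀
  have := hindex hB₀
  rw [measure_eq_iSup_isCompact_nonempty hA hA₀, measure_eq_iSup_isCompact_nonempty hB hB₀,
    ennreal_iSup_rpow _ hp, ennreal_iSup_rpow _ hp]
  refine ENNReal.iSup_add_iSup_le fun ⟨K, hKA, hK, hK₀⟩ ⟨L, hLB, hL, hL₀⟩ => ?_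
  exact (hcompact K L hK hL hK₀ hL₀).trans
    (ENNReal.rpow_le_rpow (measure_mono (add_subset_add hKA hLB)) hp.le)

end InnerRegular

lemma measure_le_measure_add_left {G : Type*} [AddGroup G] [MeasurableSpace G]
    (μ : Measure G) [μ.IsAddLeftInvariant] {A B : Set G} (hA₀ : A.Nonempty) :
    μ B ≤ μ (A + B) := by
  obtain ⟨x, hx⟩ := hA₀
  exact (measure_vadd μ x B).symm.trans_le (measure_mono (vadd_set_subset_add hx))

section Line

-- `A + min B` and `max A + B` are both contained in `A + B` and meet in the single point
-- `max A + min B`.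
lemma volume_add_le_of_isCompact {A B : Set ℝ} (hA : IsCompact A) (hB : IsCompact B)
    (hA₀ : A.Nonempty) (hB₀ : B.Nonempty) :
    volume A + volume B ≤ volume (A + B) := by
  obtain ⟨M, hMA, hM⟩ := hA.exists_isGreatest hA₀
  obtain ⟨m, hmB, hm⟩ := hB.exists_isLeast hB₀
  have hdisj : AEDisjoint volume (m +ᵥ A) (M +ᵥ B) := by
    refine measure_mono_null (t := {M + m}) ?_ (by simp)
    rintro _ ⟨⟨x, hx, rfl⟩, ⟨y, hy, hxy⟩⟩
    have := hM hx
    have := hm hy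
    simp only [vadd_eq_add, mem_singleton_iff] at hxy ⊢
    linarith
  calc volume A + volume B = volume (m +ᵥ A) + volume (M +ᵥ B) := by
        rw [measure_vadd, measure_vadd]
    _ = volume ((m +ᵥ A) ∪ (M +ᵥ B)) :=
        (measure_union₀ (hB.vadd M).measurableSet.nullMeasurableSet hdisj).symm
    _ ≤ volume (A + B) := measure_mono <| union_subset
        (add_comm B A ▸ vadd_set_subset_add hmB) (vadd_set_subset_add hMA)

lemma ofReal_mul_volume_add_le {a b : ℝ} (ha : 0 ≤ a) (hb : 0 ≤ b) {A B : Set ℝ}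
    (hA : MeasurableSet A) (hB : MeasurableSet B) (hA₀ : A.Nonempty) (hB₀ : B.Nonempty) :
    ENNReal.ofReal a * volume A + ENNReal.ofReal b * volume B ≤ volume (a • A + b • B) := by
  have hsmul {r : ℝ} (hr : 0 ≤ r) (S : Set ℝ) :
      ENNReal.ofReal r * volume S = volume (r • S) := by
    simpa using (Measure.addHaar_smul_of_nonneg volume hr S).symm
  rw [hsmul ha, hsmul hb]
  simpa only [ENNReal.rpow_one] using measure_rpow_add_le_of_forall_isCompact one_pos
    (by simpa only [ENNReal.rpow_one] using
      fun K L => volume_add_le_of_isCompact (A := K) (B := L))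
    (hA.const_smul₀ a).nullMeasurableSet (hB.const_smul₀ b).nullMeasurableSet
    hA₀.smul_set hB₀.smul_set

end Line

section PrekopaLeindler

variable {E F : Type*} [AddCommGroup E] [Module ℝ E] [AddCommGroup F] [Module ℝ F]

/-- `h` dominates the weighted geometric means of `f` and `g` at convex combinations with weights
`a` and `b`: the hypothesis of the Prékopa–Leindler inequality. -/
def GeomMeanLE (a b : ℝ) (f g h : E → ℝ≥0∞) : Prop :=
  ∀ x y, f x ^ a * g y ^ b ≤ h (a • x + b • y)

/-- The measure `μ` satisfies the Prékopa–Leindler inequality for all measurable functions and all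
positive weights `a` and `b` with `a + b = 1`. -/
def IsPrekopaLeindler [MeasurableSpace E] (μ : Measure E) : Prop :=
  ∀ ⦃a b : ℝ⦄, 0 < a → 0 < b → a + b = 1 → ∀ ⦃f g h : E → ℝ≥0∞⦄,
    Measurable f → Measurable g → Measurable h → GeomMeanLE a b f g h →
    (∫⁻ x, f x ∂μ) ^ a * (∫⁻ x, g x ∂μ) ^ b ≤ ∫⁻ x, h x ∂μ

variable {a b : ℝ}

lemma GeomMeanLE.smul_setOf_lt_add_subset {f g h : E → ℝ≥0∞} (H : GeomMeanLE a b f g h)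
    (ha : 0 < a) (hb : 0 < b) (hab : a + b = 1) {c : ℝ≥0∞} :
    a • {x | c < f x} + b • {x | c < g x} ⊆ {x | c < h x} := by
  rintro _ ⟨_, ⟨x, hx, rfl⟩, _, ⟨y, hy, rfl⟩, rfl⟩
  calc c = c ^ a * c ^ b := by
        rw [← ENNReal.rpow_add_of_nonneg _ _ ha.le hb.le, hab, ENNReal.rpow_one]
    _ < f x ^ a * g y ^ b :=
        ENNReal.mul_lt_mul (ENNReal.rpow_lt_rpow hx ha) (ENNReal.rpow_lt_rpow hy hb)
    _ ≤ h (a • x + b • y) := H x y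

lemma GeomMeanLE.mono_left {f f' g g' h : E → ℝ≥0∞} (H : GeomMeanLE a b f g h)
    (ha : 0 ≤ a) (hb : 0 ≤ b) (hf : f' ≤ f) (hg : g' ≤ g) : GeomMeanLE a b f' g' h :=
  fun x y => (mul_le_mul' (ENNReal.rpow_le_rpow (hf x) ha)
    (ENNReal.rpow_le_rpow (hg y) hb)).trans (H x y)

lemma GeomMeanLE.const_mul {f g h : E → ℝ≥0∞} (H : GeomMeanLE a b f g h)
    (ha : 0 ≤ a) (hb : 0 ≤ b) (c d : ℝ≥0∞) :
    GeomMeanLE a b (fun x => c * f x) (fun x => d * g x) (fun x => c ^ a * d ^ b * h x) := by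
  intro x y
  rw [ENNReal.mul_rpow_of_nonneg _ _ ha, ENNReal.mul_rpow_of_nonneg _ _ hb, mul_mul_mul_comm]
  exact mul_le_mul_right (H x y) _

section Line

variable {f g h : ℝ → ℝ≥0∞}

lemma GeomMeanLE.volume_setOf_lt_le (H : GeomMeanLE a b f g h)
    (ha : 0 < a) (hb : 0 < b) (hab : a + b = 1) (hf : Measurable f) (hg : Measurable g)
    (hf₁ : ⨆ x, f x = 1) (hg₁ : ⨆ x, g x = 1) (c : ℝ≥0∞) :
    ENNReal.ofReal a * volume {x | c < f x} + ENNReal.ofReal b * volume {x | c < g x} ≤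
      volume {x | c < h x} := by
  rcases lt_or_ge c 1 with hc | hc
  · have hne {u : ℝ → ℝ≥0∞} (hu : ⨆ x, u x = 1) : {x | c < u x}.Nonempty :=
      lt_iSup_iff.1 (hc.trans_eq hu.symm)
    exact (ofReal_mul_volume_add_le ha.le hb.le (measurableSet_lt measurable_const hf)
      (measurableSet_lt measurable_const hg) (hne hf₁) (hne hg₁)).trans
        (measure_mono (H.smul_setOf_lt_add_subset ha hb hab))
  · have hempty {u : ℝ → ℝ≥0∞} (hu : ⨆ x, u x = 1) : {x | c < u x} = ∅ :=
      eq_empty_of_forall_notMem fun x => ((hu ▸ le_iSup u x).trans hc).not_gt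
    simp [hempty hf₁, hempty hg₁]

lemma GeomMeanLE.lintegral_le_of_iSup_eq_one (H : GeomMeanLE a b f g h)
    (ha : 0 < a) (hb : 0 < b) (hab : a + b = 1) (hf : Measurable f) (hg : Measurable g)
    (hh : Measurable h) (hf₁ : ⨆ x, f x = 1) (hg₁ : ⨆ x, g x = 1) :
    (∫⁻ x, f x) ^ a * (∫⁻ x, g x) ^ b ≤ ∫⁻ x, h x := by
  have hmeas (u : ℝ → ℝ≥0∞) : Measurable fun s : ℝ => volume {x | ENNReal.ofReal s < u x} :=
    antitone_measure_setOf_ofReal_lt.measurable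
  calc (∫⁻ x, f x) ^ a * (∫⁻ x, g x) ^ b
      ≤ ENNReal.ofReal a * (∫⁻ x, f x) + ENNReal.ofReal b * (∫⁻ x, g x) :=
        ennreal_geom_mean_le_arith_mean ha hb hab _ _
    _ = ∫⁻ s in Ioi (0 : ℝ), (ENNReal.ofReal a * volume {x | ENNReal.ofReal s < f x} +
          ENNReal.ofReal b * volume {x | ENNReal.ofReal s < g x}) := by
        rw [lintegral_eq_lintegral_measure_ofReal_lt hf,
          lintegral_eq_lintegral_measure_ofReal_lt hg,
          lintegral_add_left ((hmeas f).const_mul _), lintegral_const_mul _ (hmeas f),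
          lintegral_const_mul _ (hmeas g)]
    _ ≤ ∫⁻ s in Ioi (0 : ℝ), volume {x | ENNReal.ofReal s < h x} :=
        lintegral_mono fun s => H.volume_setOf_lt_le ha hb hab hf hg hf₁ hg₁ _
    _ = ∫⁻ x, h x := (lintegral_eq_lintegral_measure_ofReal_lt hh).symm

lemma GeomMeanLE.lintegral_le_of_iSup_ne_top (H : GeomMeanLE a b f g h)
    (ha : 0 < a) (hb : 0 < b) (hab : a + b = 1) (hf : Measurable f) (hg : Measurable g)
    (hh : Measurable h) (hf_top : ⨆ x, f x ≠ ∞) (hg_top : ⨆ x, g x ≠ ∞) :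
    (∫⁻ x, f x) ^ a * (∫⁻ x, g x) ^ b ≤ ∫⁻ x, h x := by
  rcases eq_or_ne (⨆ x, f x) 0 with hf₀ | hf₀
  · have : ∀ x, f x = 0 := by simpa using hf₀
    simp [this, ha]
  rcases eq_or_ne (⨆ x, g x) 0 with hg₀ | hg₀
  · have : ∀ x, g x = 0 := by simpa using hg₀
    simp [this, hb]
  set M := ⨆ x, f x with hM
  set N := ⨆ x, g x with hN
  have hscaled := (H.const_mul ha.le hb.le M⁻¹ N⁻¹).lintegral_le_of_iSup_eq_one ha hb hab
    (hf.const_mul _) (hg.const_mul _) (hh.const_mul _)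
    (by rw [← ENNReal.mul_iSup, ← hM, ENNReal.inv_mul_cancel hf₀ hf_top])
    (by rw [← ENNReal.mul_iSup, ← hN, ENNReal.inv_mul_cancel hg₀ hg_top])
  rw [lintegral_const_mul _ hf, lintegral_const_mul _ hg, lintegral_const_mul _ hh,
    ENNReal.mul_rpow_of_nonneg _ _ ha.le, ENNReal.mul_rpow_of_nonneg _ _ hb.le,
    mul_mul_mul_comm] at hscaled
  refine (ENNReal.mul_le_mul_iff_right (mul_ne_zero ?_ ?_) (ENNReal.mul_ne_top ?_ ?_)).1 hscaled
  · exact (ENNReal.rpow_pos (ENNReal.inv_pos.2 hf_top) (ENNReal.inv_ne_top.2 hf₀)).ne'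
  · exact (ENNReal.rpow_pos (ENNReal.inv_pos.2 hg_top) (ENNReal.inv_ne_top.2 hg₀)).ne'
  · exact ENNReal.rpow_ne_top_of_nonneg ha.le (ENNReal.inv_ne_top.2 hf₀)
  · exact ENNReal.rpow_ne_top_of_nonneg hb.le (ENNReal.inv_ne_top.2 hg₀)

lemma isPrekopaLeindler_volume_real : IsPrekopaLeindler (volume : Measure ℝ) := by
  intro a b ha hb hab f g h hf hg hh H
  have htrunc (u : ℝ → ℝ≥0∞) (n : ℕ) : ⨆ x, min (u x) n ≠ ∞ :=
    ne_top_of_le_ne_top (ENNReal.natCast_ne_top n) (iSup_le fun x => min_le_right _ _)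
  rw [lintegral_eq_iSup_lintegral_min_natCast hf, lintegral_eq_iSup_lintegral_min_natCast hg,
    ennreal_iSup_rpow _ ha, ennreal_iSup_rpow _ hb]
  simp only [ENNReal.iSup_mul, ENNReal.mul_iSup]
  refine iSup₂_le fun n m => ?_
  exact (H.mono_left ha.le hb.le (fun x => min_le_left _ _)
    fun x => min_le_left _ _).lintegral_le_of_iSup_ne_top ha hb hab (hf.min measurable_const)
      (hg.min measurable_const) hh (htrunc f m) (htrunc g n)

end Line

namespace IsPrekopaLeindler

variable [MeasurableSpace E] [MeasurableSpace F] {μ : Measure E} {ν : Measure F}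

lemma prod [SFinite ν] (hμ : IsPrekopaLeindler μ) (hν : IsPrekopaLeindler ν) :
    IsPrekopaLeindler (μ.prod ν) := by
  intro a b ha hb hab f g h hf hg hh H
  rw [lintegral_prod _ hf.aemeasurable, lintegral_prod _ hg.aemeasurable,
    lintegral_prod _ hh.aemeasurable]
  refine hμ ha hb hab hf.lintegral_prod_right' hg.lintegral_prod_right'
    hh.lintegral_prod_right' fun x y => ?_
  exact hν ha hb hab (hf.comp measurable_prodMk_left) (hg.comp measurable_prodMk_left)
    (hh.comp measurable_prodMk_left) fun u v => H (x, u) (y, v)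

lemma map (hμ : IsPrekopaLeindler μ) (φ : E →ₗ[ℝ] F) (hφ : Measurable φ) :
    IsPrekopaLeindler (μ.map φ) := by
  intro a b ha hb hab f g h hf hg hh H
  rw [lintegral_map hf hφ, lintegral_map hg hφ, lintegral_map hh hφ]
  refine hμ ha hb hab (hf.comp hφ) (hg.comp hφ) (hh.comp hφ) fun x y => ?_
  simpa only [map_add, map_smul] using H (φ x) (φ y)

lemma smul (hμ : IsPrekopaLeindler μ) (c : ℝ≥0∞) : IsPrekopaLeindler (c • μ) := by
  intro a b ha hb hab f g h hf hg hh H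
  have hc : c ^ a * c ^ b = c := by
    rw [← ENNReal.rpow_add_of_nonneg _ _ ha.le hb.le, hab, ENNReal.rpow_one]
  simp only [lintegral_smul_measure, smul_eq_mul]
  rw [ENNReal.mul_rpow_of_nonneg _ _ ha.le, ENNReal.mul_rpow_of_nonneg _ _ hb.le,
    mul_mul_mul_comm, hc]
  gcongr
  exact hμ ha hb hab hf hg hh H

lemma measure_rpow_mul_le (hμ : IsPrekopaLeindler μ) (ha : 0 < a) (hb : 0 < b) (hab : a + b = 1)
    {A B : Set E} (hA : MeasurableSet A) (hB : MeasurableSet B)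
    (hAB : MeasurableSet (a • A + b • B)) :
    μ A ^ a * μ B ^ b ≤ μ (a • A + b • B) := by
  have hindicator :
      GeomMeanLE a b (A.indicator 1) (B.indicator 1) ((a • A + b • B).indicator 1) := by
    intro x y
    by_cases hx : x ∈ A
    · by_cases hy : y ∈ B
      · have hxy : a • x + b • y ∈ a • A + b • B :=
          add_mem_add (smul_mem_smul_set hx) (smul_mem_smul_set hy)
        simp [hx, hy, hxy]
      · simp [hy, hb]
    · simp [hx, ha]
  simpa only [lintegral_indicator_one hA, lintegral_indicator_one hB,
    lintegral_indicator_one hAB] using hμ ha hb hab (measurable_one.indicator hA)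
      (measurable_one.indicator hB) (measurable_one.indicator hAB) hindicator

end IsPrekopaLeindler

lemma isPrekopaLeindler_dirac [MeasurableSpace E] : IsPrekopaLeindler (Measure.dirac (0 : E)) := by
  intro a b _ _ _ f g h hf hg hh H
  rw [lintegral_dirac' _ hf, lintegral_dirac' _ hg, lintegral_dirac' _ hh]
  simpa using H 0 0

lemma isPrekopaLeindler_volume_pi (n : ℕ) :
    IsPrekopaLeindler (volume : Measure (Fin n → ℝ)) := by
  induction n with
  | zero =>
    rw [volume_pi, Measure.pi_of_empty _ 0]
    exact isPrekopaLeindler_dirac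
  | succ n ih =>
    let cons := Fin.consEquivL ℝ fun _ : Fin (n + 1) => ℝ
    have hcons : ⇑(MeasurableEquiv.piFinSuccAbove (fun _ : Fin (n + 1) => ℝ) 0).symm = cons := by
      ext1 x
      exact Fin.insertNth_zero' x.1 x.2
    rw [← (volume_preserving_piFinSuccAbove (fun _ : Fin (n + 1) => ℝ) 0).symm.map_eq, hcons]
    exact (isPrekopaLeindler_volume_real.prod ih).map cons.toLinearMap cons.continuous.measurable

end PrekopaLeindler

section BrunnMinkowski

variable {E : Type*} [NormedAddCommGroup E] [NormedSpace ℝ E] [FiniteDimensional ℝ E]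
  [MeasurableSpace E] [BorelSpace E] (μ : Measure E) [μ.IsAddHaarMeasure] {A B : Set E}

lemma isPrekopaLeindler_of_isAddHaarMeasure : IsPrekopaLeindler μ := by
  let e : (Fin (finrank ℝ E) → ℝ) ≃L[ℝ] E :=
    ContinuousLinearEquiv.ofFinrankEq (finrank_fin_fun ℝ)
  rw [Measure.isAddLeftInvariant_eq_smul μ (volume.map e)]
  exact ((isPrekopaLeindler_volume_pi _).map e.toLinearMap e.continuous.measurable).smul _

lemma addHaar_smul_rpow_inv_finrank [Nontrivial E] {r : ℝ} (hr : 0 ≤ r) (A : Set E) :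
    μ (r • A) ^ (1 / finrank ℝ E : ℝ) = ENNReal.ofReal r * μ A ^ (1 / finrank ℝ E : ℝ) := by
  rw [Measure.addHaar_smul_of_nonneg μ hr, ENNReal.mul_rpow_of_nonneg _ _ (by positivity),
    ENNReal.ofReal_pow hr, one_div, ENNReal.pow_rpow_inv_natCast finrank_pos.ne']

lemma exists_addHaar_inv_smul_eq_one [Nontrivial E] (hA_top : μ A ≠ ∞) (hA_zero : μ A ≠ 0) :
    ∃ r : ℝ, 0 < r ∧ μ A ^ (1 / finrank ℝ E : ℝ) = ENNReal.ofReal r ∧ μ (r⁻¹ • A) = 1 := by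
  set p : ℝ := 1 / finrank ℝ E
  have hp₀ : 0 < p := one_div_pos.2 (Nat.cast_pos.2 finrank_pos)
  have hroot_top : μ A ^ p ≠ ∞ := ENNReal.rpow_ne_top_of_nonneg hp₀.le hA_top
  have hroot_zero : μ A ^ p ≠ 0 := (ENNReal.rpow_pos (pos_iff_ne_zero.2 hA_zero) hA_top).ne'
  have hr : 0 < (μ A ^ p).toReal := ENNReal.toReal_pos hroot_zero hroot_top
  refine ⟨_, hr, (ENNReal.ofReal_toReal hroot_top).symm, ENNReal.rpow_left_injective hp₀.ne' ?_⟩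
  simp only [ENNReal.one_rpow]
  rw [addHaar_smul_rpow_inv_finrank μ (by positivity), ENNReal.ofReal_inv_of_pos hr,
    ENNReal.ofReal_toReal hroot_top, ENNReal.inv_mul_cancel hroot_zero hroot_top]

-- With `α = μ A ^ (1 / d)` and `β = μ B ^ (1 / d)`, the sets `α⁻¹ • A` and `β⁻¹ • B` have measure
-- `1`, and weighting them by `α / (α + β)` and `β / (α + β)` produces `(α + β)⁻¹ • (A + B)`.
lemma brunnMinkowski_of_isCompact_of_ne_zero [Nontrivial E] (hA : IsCompact A) (hB : IsCompact B)
    (hμA : μ A ≠ 0) (hμB : μ B ≠ 0) :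
    μ A ^ (1 / finrank ℝ E : ℝ) + μ B ^ (1 / finrank ℝ E : ℝ) ≤
      μ (A + B) ^ (1 / finrank ℝ E : ℝ) := by
  set p : ℝ := 1 / finrank ℝ E
  have hp₀ : 0 < p := one_div_pos.2 (Nat.cast_pos.2 finrank_pos)
  obtain ⟨α, hα, hAα, hA₁⟩ := exists_addHaar_inv_smul_eq_one μ hA.measure_lt_top.ne hμA
  obtain ⟨β, hβ, hBβ, hB₁⟩ := exists_addHaar_inv_smul_eq_one μ hB.measure_lt_top.ne hμB
  have hweights : (α / (α + β)) • α⁻¹ • A + (β / (α + β)) • β⁻¹ • B = (α + β)⁻¹ • (A + B) := by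
    rw [smul_smul, smul_smul, smul_add]
    congr 2 <;> field_simp
  have hone : 1 ≤ μ ((α + β)⁻¹ • (A + B)) := by
    have hmul := (isPrekopaLeindler_of_isAddHaarMeasure μ).measure_rpow_mul_le
      (a := α / (α + β)) (b := β / (α + β)) (by positivity) (by positivity) (by field_simp)
      (hA.smul α⁻¹).measurableSet (hB.smul β⁻¹).measurableSet
      (hweights ▸ ((hA.add hB).smul (α + β)⁻¹).measurableSet)
    simpa only [hA₁, hB₁, hweights, ENNReal.one_rpow, one_mul] using hmul
  have hscaled := ENNReal.rpow_le_rpow hone hp₀.le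
  rw [ENNReal.one_rpow, addHaar_smul_rpow_inv_finrank μ (by positivity),
    ENNReal.ofReal_inv_of_pos (by positivity), ← ENNReal.mul_le_iff_le_inv (by positivity)
    ENNReal.ofReal_ne_top, mul_one] at hscaled
  rwa [hAα, hBβ, ← ENNReal.ofReal_add hα.le hβ.le]

theorem brunnMinkowski [Nontrivial E] (hA : NullMeasurableSet A μ) (hB : NullMeasurableSet B μ)
    (hA₀ : A.Nonempty) (hB₀ : B.Nonempty) :
    μ A ^ (1 / finrank ℝ E : ℝ) + μ B ^ (1 / finrank ℝ E : ℝ) ≤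
      μ (A + B) ^ (1 / finrank ℝ E : ℝ) := by
  have hp₀ : 0 < (1 / finrank ℝ E : ℝ) := one_div_pos.2 (Nat.cast_pos.2 finrank_pos)
  refine measure_rpow_add_le_of_forall_isCompact hp₀ (fun K L hK hL hK₀ hL₀ => ?_) hA hB hA₀ hB₀
  rcases eq_or_ne (μ K) 0 with hμK | hμK
  · rw [hμK, ENNReal.zero_rpow_of_pos hp₀, zero_add]
    exact ENNReal.rpow_le_rpow (measure_le_measure_add_left μ hK₀) hp₀.le
  rcases eq_or_ne (μ L) 0 with hμL | hμL
  · rw [hμL, ENNReal.zero_rpow_of_pos hp₀, add_zero, add_comm K]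
    exact ENNReal.rpow_le_rpow (measure_le_measure_add_left μ hL₀) hp₀.le
  exact brunnMinkowski_of_isCompact_of_ne_zero μ hK hL hμK hμL

end BrunnMinkowski

section ParallelBodies

lemma smul_add_smul_of_convex {E : Type*} [AddCommGroup E] [Module ℝ E] {K L : Set E}
    (hK : Convex ℝ K) (hL : Convex ℝ L) {a b s r : ℝ} (ha : 0 ≤ a) (hb : 0 ≤ b)
    (hab : a + b = 1) (hs : 0 ≤ s) (hr : 0 ≤ r) :
    a • (K + s • L) + b • (K + r • L) = K + (a * s + b * r) • L := by
  have hKab : a • K + b • K = K := by rw [← hK.add_smul ha hb, hab, one_smul]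
  rw [hL.add_smul (mul_nonneg ha hs) (mul_nonneg hb hr), smul_add, smul_add, smul_smul,
    smul_smul, add_add_add_comm, hKab]

theorem stmt5_general {E : Type*} [NormedAddCommGroup E] [NormedSpace ℝ E] [FiniteDimensional ℝ E]
    [Nontrivial E] [MeasurableSpace E] [BorelSpace E] (μ : Measure E) [μ.IsAddHaarMeasure]
    {K L : Set E} (hK₀ : K.Nonempty) (hL₀ : L.Nonempty) (hK : Convex ℝ K) (hL : Convex ℝ L)
    (hK_bdd : Bornology.IsBounded K) (hL_bdd : Bornology.IsBounded L) :
    ConcaveOn ℝ (Ici 0) fun s : ℝ => (μ (K + s • L)).toReal ^ (1 / finrank ℝ E : ℝ) := by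
  have hfin (s : ℝ) : μ (K + s • L) ^ (1 / finrank ℝ E : ℝ) ≠ ∞ :=
    ENNReal.rpow_ne_top_of_nonneg (by positivity) (hK_bdd.add (hL_bdd.smul₀ s)).measure_lt_top.ne
  have hconv (s : ℝ) : Convex ℝ (K + s • L) := hK.add (hL.smul s)
  have hne (s : ℝ) : (K + s • L).Nonempty := hK₀.add hL₀.smul_set
  refine ⟨convex_Ici 0, fun s hs r hr a b ha hb hab => ?_⟩
  have hBM := brunnMinkowski μ (((hconv s).smul a).nullMeasurableSet μ)
    (((hconv r).smul b).nullMeasurableSet μ) (hne s).smul_set (hne r).smul_set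
  rw [smul_add_smul_of_convex hK hL ha hb hab hs hr, addHaar_smul_rpow_inv_finrank μ ha,
    addHaar_smul_rpow_inv_finrank μ hb] at hBM
  have hreal := ENNReal.toReal_mono (hfin _) hBM
  rw [ENNReal.toReal_add (ENNReal.mul_ne_top ENNReal.ofReal_ne_top (hfin s))
    (ENNReal.mul_ne_top ENNReal.ofReal_ne_top (hfin r))] at hreal
  simpa only [ENNReal.toReal_mul, ENNReal.toReal_rpow, ENNReal.toReal_ofReal ha,
    ENNReal.toReal_ofReal hb, smul_eq_mul] using hreal

end ParallelBodies

/-- Brunn–Minkowski for parallel bodies: for a nonempty compact convex `K ⊆ ℝ³`, the function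
`s ↦ (volume (K + s•B))^{1/3}` is concave on `[0,∞)`, where `B` is the closed unit ball. -/
theorem stmt5 (K : Set (EuclideanSpace ℝ (Fin 3))) (hne : K.Nonempty)
    (hcpt : IsCompact K) (hconv : Convex ℝ K) :
    ConcaveOn ℝ (Set.Ici 0) (fun s : ℝ =>
      (volume (K + s • Metric.closedBall (0 : EuclideanSpace ℝ (Fin 3)) 1)).toReal
        ^ ((1 : ℝ) / 3)) := by
  simpa only [finrank_euclideanSpace_fin, Nat.cast_ofNat] using
    stmt5_general volume hne (Metric.nonempty_closedBall.2 zero_le_one) hconv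
      (convex_closedBall 0 1) hcpt.isBounded Metric.isBounded_closedBall
end
end

section
/- Let A, M, V be positive real numbers such that for all s ≥ 0: (6MV − 2A²) + 2s(12πV − AM) + 2s²(4πA − M²) ≤ 0. Then Minkowski's inequality M² ≥ 4πA holds, and the isoperimetric inequality 36πV² ≤ A³ holds. -/
noncomputable section

/-!
Minkowski's inequality is the limit `s → ∞` of the hypothesis, and `s = 0` gives `3MV ≤ A²`.
Squaring the latter and inserting the former, `4πA · 9V² ≤ 9M²V² ≤ A⁴`, which is the isoperimetric
inequality multiplied by `A`.
-/

section LinearOrderedField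

open Filter

variable {K : Type*} [Field K] [LinearOrder K] [IsStrictOrderedRing K]

theorem tendsto_quadratic_atTop_of_pos (a b : K) {c : K} (hc : 0 < c) :
    Tendsto (fun s ↦ a + b * s + c * s ^ 2) atTop atTop := by
  have hlinear : Tendsto (fun s ↦ b + c * s) atTop atTop :=
    tendsto_atTop_add_const_left _ b (tendsto_id.const_mul_atTop hc)
  have hquadratic : Tendsto (fun s ↦ a + s * (b + c * s)) atTop atTop :=
    tendsto_atTop_add_const_left _ a (tendsto_id.atTop_mul_atTop₀ hlinear)
  exact hquadratic.congr fun s ↦ by ring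

theorem nonpos_of_quadratic_nonpos_of_not_bddAbove {a b c : K} {S : Set K} (hS : ¬BddAbove S)
    (h : ∀ s ∈ S, a + b * s + c * s ^ 2 ≤ 0) : c ≤ 0 := by
  by_contra! hc
  obtain ⟨N, hN⟩ :=
    eventually_atTop.1 ((tendsto_quadratic_atTop_of_pos a b hc).eventually_gt_atTop 0)
  obtain ⟨s, hsS, hNs⟩ := not_bddAbove_iff.1 hS N
  exact (hN s hNs.le).not_ge (h s hsS)

theorem isoperimetric_of_minkowski {A M V p : K} (hA : 0 < A) (hMV : 0 ≤ M * V)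
    (hAMV : 3 * (M * V) ≤ A ^ 2) (hMinkowski : 4 * p * A ≤ M ^ 2) :
    36 * p * V ^ 2 ≤ A ^ 3 := by
  refine le_of_mul_le_mul_left ?_ hA
  calc A * (36 * p * V ^ 2) = 9 * V ^ 2 * (4 * p * A) := by ring
    _ ≤ 9 * V ^ 2 * M ^ 2 := by gcongr
    _ = (3 * (M * V)) ^ 2 := by ring
    _ ≤ (A ^ 2) ^ 2 := by gcongr
    _ = A * A ^ 3 := by ring

theorem stmt7_general {A M V p b : K} {S : Set K} (hA : 0 < A) (hMV : 0 ≤ M * V)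
    (hS₀ : 0 ∈ S) (hS : ¬BddAbove S)
    (h : ∀ s ∈ S, (6 * M * V - 2 * A ^ 2) + 2 * s * b + 2 * s ^ 2 * (4 * p * A - M ^ 2) ≤ 0) :
    M ^ 2 ≥ 4 * p * A ∧ 36 * p * V ^ 2 ≤ A ^ 3 := by
  have hAMV : 3 * (M * V) ≤ A ^ 2 := by linarith [h 0 hS₀]
  have hleading : 2 * (4 * p * A - M ^ 2) ≤ 0 :=
    nonpos_of_quadratic_nonpos_of_not_bddAbove (a := 6 * M * V - 2 * A ^ 2) (b := 2 * b) hS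
      fun s hs ↦ by linarith [h s hs]
  have hMinkowski : 4 * p * A ≤ M ^ 2 := by linarith
  exact ⟨hMinkowski, isoperimetric_of_minkowski hA hMV hAMV hMinkowski⟩

end LinearOrderedField

/-- From the differentiated Brunn–Minkowski inequality along parallel bodies one deduces
Minkowski's inequality `M² ≥ 4πA` and the isoperimetric inequality `36πV² ≤ A³`. -/
theorem stmt7 (A M V : ℝ) (hA : 0 < A) (hM : 0 < M) (hV : 0 < V)
    (h : ∀ s : ℝ, 0 ≤ s →
      (6 * M * V - 2 * A ^ 2) + 2 * s * (12 * Real.pi * V - A * M) +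
        2 * s ^ 2 * (4 * Real.pi * A - M ^ 2) ≤ 0) :
    M ^ 2 ≥ 4 * Real.pi * A ∧ 36 * Real.pi * V ^ 2 ≤ A ^ 3 :=
  stmt7_general hA (mul_pos hM hV).le Set.self_mem_Ici (not_bddAbove_Ici 0) h
end
end

section
/- Fix θ ∈ (0,π) and φ, and let V : ℝ³∖{0} → ℝ be smooth and homogeneous of degree 0 with V(θ,φ) := V(ℓ(θ,φ)). Then the set of real vectors x ∈ ℝ⁴ satisfying η(x, ℓᵃ) = V(θ,φ) and η(x, mᵃ) = (ðV)(θ,φ) (the second equation using the complex-bilinear extension of η; the conjugate equation η(x, m̄ᵃ) = ð̄V then holds automatically for real x) is exactly the line { V nᵃ − (ð̄V) mᵃ − (ðV) conj(mᵃ) + λ ℓᵃ : λ ∈ ℝ }. (This is the parametrisation of the null hypersurface determined by the cut function V at null infinity.) -/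
noncomputable section

/-- The Minkowski bilinear form on `ℝ⁴`: `η(x,y) = x⁰y⁰ − x¹y¹ − x²y² − x³y³`. -/
def etaR (x y : Fin 4 → ℝ) : ℝ := x 0 * y 0 - x 1 * y 1 - x 2 * y 2 - x 3 * y 3

/-- The complex-bilinear extension of the Minkowski form. -/
def etaC (x y : Fin 4 → ℂ) : ℂ := x 0 * y 0 - x 1 * y 1 - x 2 * y 2 - x 3 * y 3

/-- The null tetrad vector `ℓᵃ = (1, ℓ)`. -/
def tetL (θ φ : ℝ) : Fin 4 → ℝ := ![1, sphL θ φ 0, sphL θ φ 1, sphL θ φ 2]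

/-- The null tetrad vector `nᵃ = (1/2)(1, −ℓ)`. -/
def tetN (θ φ : ℝ) : Fin 4 → ℝ :=
  ![1 / 2, -(1 / 2) * sphL θ φ 0, -(1 / 2) * sphL θ φ 1, -(1 / 2) * sphL θ φ 2]

/-- The null tetrad vector `mᵃ = (0, m)`. -/
def tetM (θ φ : ℝ) : Fin 4 → ℂ := ![0, sphM θ φ 0, sphM θ φ 1, sphM θ φ 2]

/-- The cut function in spherical coordinates, complex-valued. -/
def VC (V : (Fin 3 → ℝ) → ℝ) (θ φ : ℝ) : ℂ := (V (sphL θ φ) : ℂ)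

/-!
For a null tetrad `l, n, m, m̄` the dual frame with respect to `η` is `n, l, -m̄, -m`. Hence every
real `x` satisfies `x = η(x, l) n - η(x, m̄) m - η(x, m) m̄ + η(x, n) l`, with
`η(x, m̄) = conj η(x, m)`; prescribing `η(x, l)` and `η(x, m)` leaves exactly the coefficient
`η(x, n)` of `l` free. The theorem is the case of the spherical tetrad, since `ð̄V = conj (ðV)` for
real `V`.
-/

open scoped ComplexConjugate Matrix

theorem conj_eth (s : ℤ) (η : ℝ → ℝ → ℂ) (θ φ : ℝ) :
    conj (eth s η θ φ) = ethbar (-s) (fun t p => conj (η t p)) θ φ := by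
  have conj_deriv (f : ℝ → ℂ) (t : ℝ) : conj (deriv f t) = deriv (fun u => conj (f u)) t :=
    (deriv.star (f := f)).symm
  simp only [eth, ethbar, map_mul, map_add, map_div₀, map_inv₀, map_zpow₀, conj_deriv,
    Complex.conj_ofReal, Complex.conj_I, neg_neg]
  ring

theorem conj_eth_zero_VC (V : (Fin 3 → ℝ) → ℝ) (θ φ : ℝ) :
    conj (eth 0 (VC V) θ φ) = ethbar 0 (VC V) θ φ := by
  simp only [conj_eth, VC, Complex.conj_ofReal, neg_zero]
  rfl

theorem etaR_comm (x y : Fin 4 → ℝ) : etaR x y = etaR y x := by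
  simp only [etaR, mul_comm]

theorem etaC_comm (x y : Fin 4 → ℂ) : etaC x y = etaC y x := by
  simp only [etaC, mul_comm]

theorem etaC_neg_left (x y : Fin 4 → ℂ) : etaC (-x) y = -etaC x y := by
  simp only [etaC, Pi.neg_apply]
  ring

theorem etaC_ofReal (x y : Fin 4 → ℝ) :
    etaC (fun i => (x i : ℂ)) (fun i => (y i : ℂ)) = etaR x y := by
  simp only [etaC, etaR, Complex.ofReal_sub, Complex.ofReal_mul]

theorem conj_etaC (x y : Fin 4 → ℂ) :
    conj (etaC x y) = etaC (fun i => conj (x i)) (fun i => conj (y i)) := by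
  simp only [etaC, map_sub, map_mul]

theorem conj_etaC_ofReal (x : Fin 4 → ℝ) (y : Fin 4 → ℂ) :
    conj (etaC (fun i => (x i : ℂ)) y) = etaC (fun i => (x i : ℂ)) (fun i => conj (y i)) := by
  simp only [conj_etaC, Complex.conj_ofReal]

-- A one-sided inverse of a square matrix is two-sided, so duality of `e` and `f` already gives
-- completeness.
theorem eq_sum_etaC_smul_of_dual {e f : Fin 4 → Fin 4 → ℂ}
    (hef : ∀ i j, etaC (f j) (e i) = (1 : Matrix (Fin 4) (Fin 4) ℂ) i j) (x : Fin 4 → ℂ) :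
    x = ∑ i, etaC x (e i) • f i := by
  let A : Matrix (Fin 4) (Fin 4) ℂ := .of fun i => ![e i 0, -e i 1, -e i 2, -e i 3]
  let B : Matrix (Fin 4) (Fin 4) ℂ := (Matrix.of f)ᵀ
  have mulVec_eq_etaC (y : Fin 4 → ℂ) : A *ᵥ y = fun i => etaC y (e i) := by
    ext i
    simp only [A, Matrix.mulVec, dotProduct, Fin.sum_univ_four, etaC, Matrix.of_apply,
      Matrix.cons_val]
    ring
  have mul_eq_one : A * B = 1 := by
    ext i j
    exact (congrFun (mulVec_eq_etaC (f j)) i).trans (hef i j)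
  calc x = B *ᵥ (A *ᵥ x) := by
        rw [Matrix.mulVec_mulVec, mul_eq_one_comm.mp mul_eq_one, Matrix.one_mulVec]
    _ = ∑ i, etaC x (e i) • f i := by
        simp only [mulVec_eq_etaC, Matrix.mulVec_eq_sum, op_smul_eq_smul]
        rfl

/-- A Newman–Penrose null tetrad `l, n, m, m̄` for the form of signature `(+,-,-,-)`: the only
nonzero products are `η(l, n) = 1` and `η(m, m̄) = -1`. The products with `m̄` that are not listed
are conjugates of listed ones. -/
structure IsNullTetrad (l n : Fin 4 → ℝ) (m : Fin 4 → ℂ) : Prop where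
  etaR_l_l : etaR l l = 0
  etaR_n_n : etaR n n = 0
  etaR_l_n : etaR l n = 1
  etaC_l_m : etaC (fun i => (l i : ℂ)) m = 0
  etaC_n_m : etaC (fun i => (n i : ℂ)) m = 0
  etaC_m_m : etaC m m = 0
  etaC_m_conj_m : etaC m (fun i => conj (m i)) = -1

/-- The vector `W n − δ̄ m − δ m̄ + λ l`. For a null tetrad these are the solutions of `η(x, l) = W`,
`η(x, m) = δ`; the components are real but kept in `ℂ`, where the pairings with `m` live. -/
def tetradPoint (l n : Fin 4 → ℝ) (m : Fin 4 → ℂ) (W : ℝ) (δ : ℂ) (lam : ℝ) : Fin 4 → ℂ :=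
  fun i => W * n i - conj δ * m i - δ * conj (m i) + lam * l i

theorem ofReal_re_tetradPoint (l n : Fin 4 → ℝ) (m : Fin 4 → ℂ) (W : ℝ) (δ : ℂ) (lam : ℝ)
    (i : Fin 4) :
    ((tetradPoint l n m W δ lam i).re : ℂ) = tetradPoint l n m W δ lam i := by
  rw [← Complex.conj_eq_iff_re]
  simp only [tetradPoint, map_add, map_sub, map_mul, Complex.conj_ofReal, Complex.conj_conj]
  ring

theorem etaC_tetradPoint_left (l n : Fin 4 → ℝ) (m : Fin 4 → ℂ) (W : ℝ) (δ : ℂ) (lam : ℝ)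
    (y : Fin 4 → ℂ) :
    etaC (tetradPoint l n m W δ lam) y =
      W * etaC (fun i => (n i : ℂ)) y - conj δ * etaC m y - δ * etaC (fun i => conj (m i)) y +
        lam * etaC (fun i => (l i : ℂ)) y := by
  simp only [etaC, tetradPoint]
  ring

namespace IsNullTetrad

variable {l n : Fin 4 → ℝ} {m : Fin 4 → ℂ}

theorem etaC_l_conj_m (h : IsNullTetrad l n m) :
    etaC (fun i => (l i : ℂ)) (fun i => conj (m i)) = 0 := by
  rw [← conj_etaC_ofReal, h.etaC_l_m, map_zero]

theorem etaC_n_conj_m (h : IsNullTetrad l n m) :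
    etaC (fun i => (n i : ℂ)) (fun i => conj (m i)) = 0 := by
  rw [← conj_etaC_ofReal, h.etaC_n_m, map_zero]

theorem etaC_conj_m_conj_m (h : IsNullTetrad l n m) :
    etaC (fun i => conj (m i)) (fun i => conj (m i)) = 0 := by
  rw [← conj_etaC, h.etaC_m_m, map_zero]

theorem etaC_dual_frame (h : IsNullTetrad l n m) (i j : Fin 4) :
    etaC (![fun k => (n k : ℂ), fun k => (l k : ℂ), -fun k => conj (m k), -m] j)
      (![fun k => (l k : ℂ), fun k => (n k : ℂ), m, fun k => conj (m k)] i) =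
      (1 : Matrix (Fin 4) (Fin 4) ℂ) i j := by
  fin_cases i <;> fin_cases j <;>
    simp [etaC_neg_left, etaC_ofReal, etaR_comm n l, etaC_comm m fun k => (l k : ℂ),
      etaC_comm m fun k => (n k : ℂ), etaC_comm (fun k => conj (m k)) fun k => (l k : ℂ),
      etaC_comm (fun k => conj (m k)) fun k => (n k : ℂ), etaC_comm (fun k => conj (m k)) m,
      h.etaR_l_l, h.etaR_n_n, h.etaR_l_n, h.etaC_l_m, h.etaC_n_m, h.etaC_m_m, h.etaC_m_conj_m,
      h.etaC_l_conj_m, h.etaC_n_conj_m, h.etaC_conj_m_conj_m]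

theorem ofReal_eq_tetradPoint (h : IsNullTetrad l n m) (x : Fin 4 → ℝ) :
    (fun i => (x i : ℂ)) =
      tetradPoint l n m (etaR x l) (etaC (fun i => (x i : ℂ)) m) (etaR x n) := by
  refine (eq_sum_etaC_smul_of_dual h.etaC_dual_frame fun i => (x i : ℂ)).trans ?_
  ext i
  simp only [Fin.sum_univ_four, Matrix.cons_val, Pi.add_apply, Pi.smul_apply, Pi.neg_apply,
    etaC_ofReal, ← conj_etaC_ofReal, tetradPoint, smul_eq_mul]
  ring

theorem etaR_re_tetradPoint_l (h : IsNullTetrad l n m) (W : ℝ) (δ : ℂ) (lam : ℝ) :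
    etaR (fun i => (tetradPoint l n m W δ lam i).re) l = W := by
  apply Complex.ofReal_injective
  simp only [← etaC_ofReal, ofReal_re_tetradPoint, etaC_tetradPoint_left]
  rw [etaC_ofReal, etaC_ofReal, etaR_comm n l, etaC_comm m, etaC_comm (fun i => conj (m i)),
    h.etaR_l_n, h.etaC_l_m, h.etaC_l_conj_m, h.etaR_l_l]
  simp

theorem etaC_re_tetradPoint_m (h : IsNullTetrad l n m) (W : ℝ) (δ : ℂ) (lam : ℝ) :
    etaC (fun i => ((tetradPoint l n m W δ lam i).re : ℂ)) m = δ := by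
  simp only [ofReal_re_tetradPoint, etaC_tetradPoint_left]
  rw [etaC_comm (fun i => conj (m i)), h.etaC_n_m, h.etaC_m_m, h.etaC_m_conj_m, h.etaC_l_m]
  ring

end IsNullTetrad

theorem sphL_dotProduct_self (θ φ : ℝ) : sphL θ φ ⬝ᵥ sphL θ φ = 1 := by
  simp only [dotProduct, Fin.sum_univ_three, sphL, Matrix.cons_val]
  linear_combination Real.sin θ ^ 2 * Real.sin_sq_add_cos_sq φ + Real.sin_sq_add_cos_sq θ

theorem ofReal_sphL_dotProduct_sphM (θ φ : ℝ) : (fun i => (sphL θ φ i : ℂ)) ⬝ᵥ sphM θ φ = 0 := by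
  simp only [dotProduct, Fin.sum_univ_three, sphL, sphM, Matrix.cons_val]
  push_cast
  linear_combination (√2 : ℂ)⁻¹ * Complex.sin θ * Complex.cos θ * Complex.sin_sq_add_cos_sq φ

theorem sphM_dotProduct_self (θ φ : ℝ) : sphM θ φ ⬝ᵥ sphM θ φ = 0 := by
  simp only [dotProduct, Fin.sum_univ_three, sphM, Matrix.cons_val]
  push_cast
  linear_combination (√2 : ℂ)⁻¹ ^ 2 * (
    (Complex.cos θ ^ 2 - 1) * Complex.sin_sq_add_cos_sq φ + Complex.sin_sq_add_cos_sq θ +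
      (Complex.sin φ ^ 2 + Complex.cos φ ^ 2) * Complex.I_sq)

theorem sphM_dotProduct_conj (θ φ : ℝ) : sphM θ φ ⬝ᵥ (fun i => conj (sphM θ φ i)) = 1 := by
  have inv_sqrt_two_sq : (√2 : ℂ)⁻¹ ^ 2 = 1 / 2 := by
    rw [inv_pow, ← Complex.ofReal_pow, Real.sq_sqrt zero_le_two]
    norm_num
  simp only [dotProduct, Fin.sum_univ_three, sphM, Matrix.cons_val, map_mul, map_add, map_sub,
    map_neg, map_inv₀, Complex.conj_ofReal, Complex.conj_I]
  push_cast
  linear_combination 2 * inv_sqrt_two_sq + (√2 : ℂ)⁻¹ ^ 2 * (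
    (Complex.cos θ ^ 2 + 1) * Complex.sin_sq_add_cos_sq φ + Complex.sin_sq_add_cos_sq θ -
      (Complex.sin φ ^ 2 + Complex.cos φ ^ 2) * Complex.I_sq)

theorem isNullTetrad_tetL_tetN_tetM (θ φ : ℝ) : IsNullTetrad (tetL θ φ) (tetN θ φ) (tetM θ φ) := by
  have l_l := sphL_dotProduct_self θ φ
  have l_m := ofReal_sphL_dotProduct_sphM θ φ
  have m_m := sphM_dotProduct_self θ φ
  have m_conj_m := sphM_dotProduct_conj θ φ
  simp only [dotProduct, Fin.sum_univ_three] at l_l l_m m_m m_conj_m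
  constructor <;>
    simp only [etaR, etaC, tetL, tetN, tetM, Matrix.cons_val] <;> push_cast
  · linear_combination -l_l
  · linear_combination -(1 / 4) * l_l
  · linear_combination (1 / 2) * l_l
  · linear_combination -l_m
  · linear_combination (1 / 2) * l_m
  · linear_combination -m_m
  · linear_combination -m_conj_m

theorem stmt10_general {l n : Fin 4 → ℝ} {m : Fin 4 → ℂ} (h : IsNullTetrad l n m)
    (W : ℝ) (δ : ℂ) :
    {x : Fin 4 → ℝ | etaR x l = W ∧ etaC (fun i => (x i : ℂ)) m = δ} =
      {x : Fin 4 → ℝ | ∃ lam : ℝ, x = fun i => (tetradPoint l n m W δ lam i).re} := by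
  ext x
  constructor
  · rintro ⟨rfl, rfl⟩
    exact ⟨etaR x n, funext fun i => congrArg Complex.re (congrFun (h.ofReal_eq_tetradPoint x) i)⟩
  · rintro ⟨lam, rfl⟩
    exact ⟨h.etaR_re_tetradPoint_l W δ lam, h.etaC_re_tetradPoint_m W δ lam⟩

/-- The real vectors `x ∈ ℝ⁴` with `η(x, ℓᵃ) = V` and `η(x, mᵃ) = ðV` form exactly the line
`{ V nᵃ − (ð̄V) mᵃ − (ðV) conj(mᵃ) + λ ℓᵃ : λ ∈ ℝ }`. -/
theorem stmt10 (θ φ : ℝ) (hθ : θ ∈ Set.Ioo 0 Real.pi)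
    (V : (Fin 3 → ℝ) → ℝ)
    (hV : ContDiffOn ℝ (⊤ : ℕ∞) V {v : Fin 3 → ℝ | v ≠ 0})
    (hhom : ∀ v : Fin 3 → ℝ, v ≠ 0 → ∀ t : ℝ, 0 < t → V (t • v) = V v) :
    {x : Fin 4 → ℝ | etaR x (tetL θ φ) = V (sphL θ φ) ∧
        etaC (fun i => (x i : ℂ)) (tetM θ φ) = eth 0 (VC V) θ φ} =
      {x : Fin 4 → ℝ | ∃ lam : ℝ, x = fun i =>
        ((V (sphL θ φ) : ℂ) * (tetN θ φ i : ℂ) - ethbar 0 (VC V) θ φ * tetM θ φ i -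
          eth 0 (VC V) θ φ * (starRingEnd ℂ) (tetM θ φ i) +
          (lam : ℂ) * (tetL θ φ i : ℂ)).re} := by
  rw [← conj_eth_zero_VC]
  exact stmt10_general (isNullTetrad_tetL_tetN_tetM θ φ) _ _
end
end
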